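/- arXiv:2508.16986 — 12 statements merged into one kernel-verified Lean document; each statement's English description precedes it below -/
import Mathlib

section
/- Let F = (A, R) be a finitary argumentation framework, and fix subsets D ⊆ A and E ⊆ A. Let Y be the set of arguments b ∈ A such that there exists an admissible extension X with D ∪ {b} ⊆ X and E ∩ X = ∅. Then there exists an infinite admissible extension S with D ⊆ S and S ∩ E = ∅ if and only if Y is infinite. -/
namespace AF

variable {α : Type*}

/-- `S` is conflict-free: no argument in `S` attacks another argument in `S`. -/
def ConflictFree (R : α → α → Prop) (S : Set α) : Prop :=
  ∀ a ∈ S, ∀ b ∈ S, ¬ R a b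

/-- `S` defends the argument `a`: every attacker of `a` is attacked by some element of `S`. -/
def Defends (R : α → α → Prop) (S : Set α) (a : α) : Prop :=
  ∀ x, R x a → ∃ y ∈ S, R y x

/-- `S` is admissible: conflict-free and defends each of its elements. -/
def Admissible (R : α → α → Prop) (S : Set α) : Prop :=
  ConflictFree R S ∧ ∀ a ∈ S, Defends R S a

/-- `S` is stable: conflict-free and attacks every argument outside of `S`. -/
def Stable (R : α → α → Prop) (S : Set α) : Prop :=
  ConflictFree R S ∧ ∀ a, a ∉ S → ∃ b ∈ S, R b a

/-- `S` is complete: conflict-free and equal to the set of arguments it defends. -/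
def Complete (R : α → α → Prop) (S : Set α) : Prop :=
  ConflictFree R S ∧ S = {a | Defends R S a}

/-- `S` is naive: conflict-free and no proper superset of `S` is conflict-free. -/
def Naive (R : α → α → Prop) (S : Set α) : Prop :=
  ConflictFree R S ∧ ∀ T : Set α, S ⊆ T → ConflictFree R T → T = S

/-- The framework is finitary: each argument has only finitely many attackers. -/
def Finitary (R : α → α → Prop) : Prop :=
  ∀ a : α, {x : α | R x a}.Finite

theorem infinitely_many_implies_one_infinite_admissible
    (R : α → α → Prop) (hfin : Finitary R) (D E : Set α) :
    (∃ S : Set α, S.Infinite ∧ Admissible R S ∧ D ⊆ S ∧ S ∩ E = ∅) ↔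
      {b : α | ∃ X : Set α, Admissible R X ∧ D ∪ {b} ⊆ X ∧ E ∩ X = ∅}.Infinite := by
  constructor
  · rintro ⟨S, hS, hadm, hD, hE⟩
    refine hS.mono fun b hb => ⟨S, hadm, ?_, by rw [Set.inter_comm]; exact hE⟩
    exact Set.union_subset hD (Set.singleton_subset_iff.2 hb)
  · intro hY
    have hinf := hY.to_subtype
    set Y := {b : α | ∃ X : Set α, Admissible R X ∧ D ∪ {b} ⊆ X ∧ E ∩ X = ∅} with hYdef
    have hex : ∀ b : Y, ∃ X : Set α, Admissible R X ∧ D ∪ {b.1} ⊆ X ∧ E ∩ X = ∅ :=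
      fun b => b.2
    choose X hXa hXs hXE using hex
    have hXE2 : ∀ b, ∀ e ∈ X b, e ∉ E := fun b e he heE => by
      have : e ∈ E ∩ X b := ⟨heE, he⟩
      rw [hXE b] at this
      exact this
    let U : Ultrafilter Y := Filter.hyperfilter Y
    -- pigeonhole along the ultrafilter
    have pigeon : ∀ T : Set α, T.Finite → (∀ᶠ b in (U : Filter Y), ∃ c ∈ T, c ∈ X b) →
        ∃ c ∈ T, ∀ᶠ b in (U : Filter Y), c ∈ X b := by
      intro T hT h
      refine (Ultrafilter.finite_biUnion_mem_iff (f := U) (s := fun c => {b | c ∈ X b}) hT).1 ?_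
      refine Filter.mem_of_superset h ?_
      rintro b ⟨c, hc, hcb⟩
      exact Set.mem_biUnion hc hcb
    let M : Set α := {c | ∀ᶠ b in (U : Filter Y), c ∈ X b}
    let P : Set (Set α) := {S | Admissible R S ∧ D ⊆ S ∧ ∀ e ∈ S, e ∉ E}
    have hM : M ∈ P := by
      refine ⟨⟨?_, ?_⟩, ?_, ?_⟩
      · intro a ha b hb hab
        obtain ⟨y, hy1, hy2⟩ := (Filter.Eventually.and ha hb).exists
        exact (hXa y).1 a hy1 b hy2 hab
      · intro a ha x hx
        obtain ⟨c, hc, h⟩ := pigeon {y | R y x} (hfin x) (by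
          filter_upwards [ha] with b hb
          obtain ⟨y, hy, hyx⟩ := (hXa b).2 a hb x hx
          exact ⟨y, hyx, hy⟩)
        exact ⟨c, h, hc⟩
      · intro d hd
        exact Filter.Eventually.of_forall fun b => hXs b (Or.inl hd)
      · intro e he
        obtain ⟨y, hy⟩ := Filter.Eventually.exists he
        exact hXE2 y e hy
    obtain ⟨N, hMN, hN⟩ := zorn_subset_nonempty P (by
      intro c hc hchain hne
      refine ⟨⋃₀ c, ⟨⟨?_, ?_⟩, ?_, ?_⟩, fun s hs => Set.subset_sUnion_of_mem hs⟩
      · rintro a ⟨s, hs, has⟩ b ⟨t, ht, hbt⟩ hab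
        rcases hchain.total hs ht with h | h
        · exact (hc ht).1.1 a (h has) b hbt hab
        · exact (hc hs).1.1 a has b (h hbt) hab
      · rintro a ⟨s, hs, has⟩ x hx
        obtain ⟨y, hy, hyx⟩ := (hc hs).1.2 a has x hx
        exact ⟨y, ⟨s, hs, hy⟩, hyx⟩
      · obtain ⟨s, hs⟩ := hne
        exact fun d hd => ⟨s, hs, (hc hs).2.1 hd⟩
      · rintro e ⟨s, hs, hes⟩
        exact (hc hs).2.2 e hes) M hM
    obtain ⟨hNa, hND, hNE⟩ := hN.prop
    refine ⟨N, ?_, hNa, hND, ?_⟩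
    · intro hNfin
      have hNY : ∀ᶠ b in (U : Filter Y), b.1 ∉ N :=
        Filter.compl_mem_hyperfilter_of_finite
          (hNfin.preimage (f := fun b : Y => b.1) Subtype.val_injective.injOn)
      obtain ⟨c, hc, hcM⟩ := pigeon (⋃ m ∈ N, {x | R x m})
        (hNfin.biUnion fun m _ => hfin m) (by
          filter_upwards [hNY] with b hb
          by_contra hcon
          have hno : ∀ c ∈ X b, ∀ m ∈ N, ¬ R c m := fun c hc m hm hcm =>
            hcon ⟨c, Set.mem_biUnion hm hcm, hc⟩
          have hU : N ∪ X b ∈ P := by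
            refine ⟨⟨?_, ?_⟩, fun d hd => Or.inl (hND hd), ?_⟩
            · rintro p (hp | hp) q (hq | hq) hpq
              · exact hNa.1 p hp q hq hpq
              · obtain ⟨y, hy, hyp⟩ := (hXa b).2 q hq p hpq
                exact hno y hy p hp hyp
              · exact hno p hp q hq hpq
              · exact (hXa b).1 p hp q hq hpq
            · rintro p (hp | hp) x hx
              · obtain ⟨y, hy, h⟩ := hNa.2 p hp x hx
                exact ⟨y, Or.inl hy, h⟩
              · obtain ⟨y, hy, h⟩ := (hXa b).2 p hp x hx
                exact ⟨y, Or.inr hy, h⟩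
            · rintro e (he | he)
              · exact hNE e he
              · exact hXE2 b e he
          exact hb (hN.le_of_ge hU Set.subset_union_left (Or.inr (hXs b (Or.inr rfl)))))
      simp only [Set.mem_iUnion] at hc
      obtain ⟨m, hm, hcm⟩ := hc
      exact hNa.1 c (hMN hcM) m hm hcm
    · ext e
      simp only [Set.mem_inter_iff, Set.mem_empty_iff_false, iff_false, not_and]
      exact hNE e

end AF
end

section
/- Let F = (A, R) be a finitary argumentation framework, and fix subsets D ⊆ A and E ⊆ A. Let Y be the set of arguments b ∈ A such that there exists a stable extension X with D ∪ {b} ⊆ X and E ∩ X = ∅. Then there exists an infinite stable extension S with D ⊆ S and S ∩ E = ∅ if and only if Y is infinite. -/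
namespace AF

variable {α : Type*}

theorem infinitely_many_implies_one_infinite_stable
    (R : α → α → Prop) (hfin : Finitary R) (D E : Set α) :
    (∃ S : Set α, S.Infinite ∧ Stable R S ∧ D ⊆ S ∧ S ∩ E = ∅) ↔
      {b : α | ∃ X : Set α, Stable R X ∧ D ∪ {b} ⊆ X ∧ E ∩ X = ∅}.Infinite := by
  constructor
  · rintro ⟨S, hS, hst, hD, hE⟩
    refine hS.mono fun b hb => ⟨S, hst, ?_, by rw [Set.inter_comm]; exact hE⟩
    exact Set.union_subset hD (Set.singleton_subset_iff.2 hb)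
  · intro hY
    by_contra hno
    have hK : {X : Set α | Stable R X ∧ D ⊆ X ∧ X ∩ E = ∅}.Infinite := by
      intro hKf
      apply hY
      refine (hKf.sUnion ?_).subset ?_
      · intro X hX
        by_contra hXi
        exact hno ⟨X, hXi, hX⟩
      · rintro b ⟨X, hX, hD, hE⟩
        refine ⟨X, ⟨hX, Set.subset_union_left.trans hD, by rw [Set.inter_comm]; exact hE⟩, ?_⟩
        exact hD (Or.inr rfl)
    haveI := hK.cofinite_inf_principal_neBot
    obtain ⟨U, hU⟩ := Ultrafilter.exists_le
      (Filter.cofinite ⊓ Filter.principal {X : Set α | Stable R X ∧ D ⊆ X ∧ X ∩ E = ∅})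
    have hUK : ∀ᶠ X in (U : Filter (Set α)), Stable R X ∧ D ⊆ X ∧ X ∩ E = ∅ :=
      Filter.le_principal_iff.1 (hU.trans inf_le_right)
    have hUc : (U : Filter (Set α)) ≤ Filter.cofinite := hU.trans inf_le_left
    let S : Set α := {a | ∀ᶠ X in (U : Filter (Set α)), a ∈ X}
    have hcf : ConflictFree R S := by
      intro a ha b hb hab
      obtain ⟨X, h1, h2, h3⟩ := (Filter.Eventually.and ha (Filter.Eventually.and hb hUK)).exists
      exact h3.1.1 a h1 b h2 hab
    have hst : Stable R S := by
      refine ⟨hcf, fun a ha => ?_⟩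
      by_contra hn
      push Not at hn
      have h1 : ∀ᶠ X in (U : Filter (Set α)), a ∉ X := Ultrafilter.eventually_not.2 ha
      have h2 : ∀ᶠ X in (U : Filter (Set α)), ∀ b ∈ {x | R x a}, b ∉ X :=
        (Filter.eventually_all_finite (hfin a)).2 fun b hb =>
          Ultrafilter.eventually_not.2 fun hbS => hn b hbS hb
      obtain ⟨X, h1, h2, h3⟩ := (h1.and (h2.and hUK)).exists
      obtain ⟨b, hb, hba⟩ := h3.1.2 a h1
      exact h2 b hba hb
    have hD : D ⊆ S := fun a ha => hUK.mono fun X hX => hX.2.1 ha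
    have hE : S ∩ E = ∅ := by
      ext a
      simp only [Set.mem_inter_iff, Set.mem_empty_iff_false, iff_false]
      rintro ⟨ha, haE⟩
      obtain ⟨X, h1, h3⟩ := (Filter.Eventually.and ha hUK).exists
      have : a ∈ X ∩ E := ⟨h1, haE⟩
      rw [h3.2.2] at this
      exact this
    have hSf : S.Finite := by
      by_contra hSi
      exact hno ⟨S, hSi, hst, hD, hE⟩
    have hsub : ∀ᶠ X in (U : Filter (Set α)), ∀ a ∈ S, a ∈ X :=
      (Filter.eventually_all_finite hSf).2 fun a ha => ha
    have hne : ∀ᶠ X in (U : Filter (Set α)), X ≠ S :=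
      hUc (Set.finite_singleton S).compl_mem_cofinite
    obtain ⟨X, h1, h2, h3⟩ := (hsub.and (hne.and hUK)).exists
    refine h2 (Set.Subset.antisymm (fun a ha => ?_) h1)
    by_contra haS
    obtain ⟨b, hb, hba⟩ := hst.2 a haS
    exact h3.1.1 b (h1 b hb) a ha hba

end AF
end

section
/- Let F = (A, R) be a finitary argumentation framework, let C be an infinite index set, and for each b ∈ C let X_b be a finite admissible extension of F such that for all distinct b, b' ∈ C some element of X_b attacks some element of X_{b'}. Suppose S ⊆ A is such that the set {b ∈ C : S ⊆ X_b} is infinite. Then there exists an argument x ∉ S such that the set {b ∈ C : S ∪ {x} ⊆ X_b} is infinite. -/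
namespace AF

variable {α : Type*}

theorem add_an_element {ι : Type*}
    (R : α → α → Prop) (hfin : Finitary R)
    (C : Set ι) (hC : C.Infinite) (X : ι → Set α)
    (hXfin : ∀ b ∈ C, (X b).Finite)
    (hXadm : ∀ b ∈ C, Admissible R (X b))
    (hatt : ∀ b ∈ C, ∀ b' ∈ C, b ≠ b' → ∃ x ∈ X b, ∃ y ∈ X b', R x y)
    (S : Set α) (hS : {b ∈ C | S ⊆ X b}.Infinite) :
    ∃ x ∉ S, {b ∈ C | S ∪ {x} ⊆ X b}.Infinite := by
  by_contra hcon
  push Not at hcon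
  obtain ⟨b0, hb0C, hb0S⟩ := hS.nonempty
  have hT : (⋃ y ∈ X b0, {x : α | R x y}).Finite :=
    (hXfin b0 hb0C).biUnion (fun y _ => hfin y)
  have hU : (⋃ x ∈ (⋃ y ∈ X b0, {x : α | R x y}), {b ∈ C | S ∪ {x} ⊆ X b}).Finite := by
    refine hT.biUnion (fun x hx => ?_)
    simp only [Set.mem_iUnion, Set.mem_setOf_eq] at hx
    obtain ⟨y, hy, hxy⟩ := hx
    have hxS : x ∉ S := fun h => (hXadm b0 hb0C).1 x (hb0S h) y hy hxy
    have := hcon x hxS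
    first | exact this | exact Set.not_infinite.mp this
  refine hS ((hU.union (Set.finite_singleton b0)).subset ?_)
  rintro b ⟨hbC, hbS⟩
  by_cases hb : b = b0
  · exact Or.inr hb
  · left
    obtain ⟨x, hx, y, hy, hxy⟩ := hatt b hbC b0 hb0C hb
    simp only [Set.mem_iUnion, Set.mem_setOf_eq]
    exact ⟨x, ⟨y, hy, hxy⟩, hbC, Set.union_subset hbS (Set.singleton_subset_iff.mpr hx)⟩

end AF
end

section
/- Let F = (A, R) be a finitary argumentation framework, let C be an index set, and for each b ∈ C let X_b be an admissible extension of F. Suppose S ⊆ A is such that the set {b ∈ C : S ⊆ X_b} is infinite, and let y ∈ S and let z be an argument with z ↝ y. Then there exists an argument x with x ↝ z such that the set {b ∈ C : S ∪ {x} ⊆ X_b} is infinite. -/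
namespace AF

variable {α : Type*}

theorem make_it_admissible {ι : Type*}
    (R : α → α → Prop) (hfin : Finitary R)
    (C : Set ι) (X : ι → Set α)
    (hXadm : ∀ b ∈ C, Admissible R (X b))
    (S : Set α) (hS : {b ∈ C | S ⊆ X b}.Infinite)
    (y : α) (hy : y ∈ S) (z : α) (hz : R z y) :
    ∃ x : α, R x z ∧ {b ∈ C | S ∪ {x} ⊆ X b}.Infinite := by
  by_contra hcon
  push Not at hcon
  apply hS
  refine ((hfin z).biUnion (t := fun x => {b ∈ C | S ∪ {x} ⊆ X b}) ?_).subset ?_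
  · intro x hx
    exact Set.not_infinite.mp (fun h => (hcon x hx) |> fun h' => by simp_all)
  · rintro b ⟨hbC, hb⟩
    obtain ⟨x, hxX, hxz⟩ := (hXadm b hbC).2 y (hb hy) z hz
    refine Set.mem_biUnion (show x ∈ {x | R x z} from hxz) ⟨hbC, ?_⟩
    exact Set.union_subset hb (Set.singleton_subset_iff.mpr hxX)

end AF
end

section
/- Let F = (A, R) be a finitary argumentation framework, let C be an index set, and for each b ∈ C let X_b be a stable extension of F. Suppose S ⊆ A is such that the set {b ∈ C : S ⊆ X_b} is infinite, and let z be any argument. Then there exists an argument x with either x = z or x ↝ z, such that the set {b ∈ C : S ∪ {x} ⊆ X_b} is infinite. -/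
namespace AF

variable {α : Type*}

theorem make_it_stable {ι : Type*}
    (R : α → α → Prop) (hfin : Finitary R)
    (C : Set ι) (X : ι → Set α)
    (hXstb : ∀ b ∈ C, Stable R (X b))
    (S : Set α) (hS : {b ∈ C | S ⊆ X b}.Infinite)
    (z : α) :
    ∃ x : α, (x = z ∨ R x z) ∧ {b ∈ C | S ∪ {x} ⊆ X b}.Infinite := by
  by_contra hcon
  push Not at hcon
  have hT : (insert z {x : α | R x z}).Finite := (hfin z).insert z
  apply hS
  refine (hT.biUnion (t := fun x => {b ∈ C | S ∪ {x} ⊆ X b}) ?_).subset ?_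
  · intro x hx
    exact Set.not_infinite.mp (fun h => absurd h (by simpa using hcon x hx))
  · rintro b ⟨hb, hSb⟩
    by_cases hz : z ∈ X b
    · exact Set.mem_biUnion (Set.mem_insert z _)
        ⟨hb, Set.union_subset hSb (Set.singleton_subset_iff.mpr hz)⟩
    · obtain ⟨y, hy, hyz⟩ := (hXstb b hb).2 z hz
      exact Set.mem_biUnion (Set.mem_insert_of_mem z hyz)
        ⟨hb, Set.union_subset hSb (Set.singleton_subset_iff.mpr hy)⟩

end AF
end

section
/- Let F = (A, R) be a finitary argumentation framework. Then F has an infinite admissible extension if and only if for every natural number n there exists an admissible extension of F containing at least n arguments. -/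
namespace AF

variable {α : Type*}

theorem Admissible.union {R : α → α → Prop} {S T : Set α} (hS : Admissible R S)
    (hT : Admissible R T) (h : ∀ a ∈ T, ∀ b ∈ S, ¬ R a b) : Admissible R (S ∪ T) := by
  have h2 : ∀ a ∈ S, ∀ b ∈ T, ¬ R a b := by
    intro a ha b hb hab
    obtain ⟨y, hy, hya⟩ := hT.2 b hb a hab
    exact h y hy a ha hya
  refine ⟨?_, ?_⟩
  · rintro a (ha | ha) b (hb | hb)
    · exact hS.1 a ha b hb
    · exact h2 a ha b hb
    · exact h a ha b hb
    · exact hT.1 a ha b hb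
  · rintro a (ha | ha) x hx
    · obtain ⟨y, hy, hyx⟩ := hS.2 a ha x hx
      exact ⟨y, Or.inl hy, hyx⟩
    · obtain ⟨y, hy, hyx⟩ := hT.2 a ha x hx
      exact ⟨y, Or.inr hy, hyx⟩

theorem exists_maximal_admissible {R : α → α → Prop} {S : Set α} (hS : Admissible R S) :
    ∃ M, S ⊆ M ∧ Maximal (Admissible R) M := by
  refine zorn_subset_nonempty {S | Admissible R S} ?_ S hS
  intro c hc hch _
  refine ⟨⋃₀ c, ⟨?_, ?_⟩, fun s hs => Set.subset_sUnion_of_mem hs⟩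
  · rintro a ⟨s, hs, ha⟩ b ⟨t, ht, hb⟩
    rcases hch.total hs ht with h | h
    · exact (hc ht).1 a (h ha) b hb
    · exact (hc hs).1 a ha b (h hb)
  · rintro a ⟨s, hs, ha⟩ x hx
    obtain ⟨y, hy, hyx⟩ := (hc hs).2 a ha x hx
    exact ⟨y, ⟨s, hs, hy⟩, hyx⟩

/-- `F` lies in arbitrarily large admissible sets. -/
def Big (R : α → α → Prop) (F : Set α) : Prop :=
  ∀ n : ℕ, ∃ T : Set α, F ⊆ T ∧ Admissible R T ∧ (n : ℕ∞) ≤ T.encard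

theorem Big.step {R : α → α → Prop} (hfin : Finitary R)
    (hno : ∀ S, Admissible R S → S.Finite) {F : Set α} (hF : Big R F) :
    ∃ a, a ∉ F ∧ Big R (insert a F) := by
  obtain ⟨T0, hFT0, hT0, -⟩ := hF 0
  obtain ⟨S, hTS, hS⟩ := exists_maximal_admissible hT0
  have hSf := hno S hS.prop
  have hFS : F ⊆ S := hFT0.trans hTS
  have hAf : (⋃ b ∈ S, {x | R x b}).Finite := hSf.biUnion fun b _ => hfin b
  by_contra hcon
  push Not at hcon
  have key : ∀ a, ∃ n : ℕ, a ∉ F → ∀ T : Set α, insert a F ⊆ T → Admissible R T →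
      ¬ (n : ℕ∞) ≤ T.encard := by
    intro a
    by_cases ha : a ∈ F
    · exact ⟨0, fun h => absurd ha h⟩
    · have := hcon a ha
      unfold Big at this
      push Not at this
      obtain ⟨n, hn⟩ := this
      exact ⟨n, fun _ T h1 h2 => not_le.mpr (hn T h1 h2)⟩
  choose f hf using key
  obtain ⟨N, hN⟩ := (hAf.image f).bddAbove
  obtain ⟨T, hFT, hT, hc⟩ := hF (max N (S.ncard + 1))
  by_cases h : ∀ a ∈ T, ∀ b ∈ S, ¬ R a b
  · have hu := hS.prop.union hT h
    have hTS : T ⊆ S := Set.subset_union_right.trans (hS.le_of_ge hu Set.subset_union_left)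
    have h1 := hc.trans (Set.encard_le_encard hTS)
    rw [← hSf.cast_ncard_eq] at h1
    have h2 : max N (S.ncard + 1) ≤ S.ncard := by exact_mod_cast h1
    omega
  · push Not at h
    obtain ⟨a, ha, b, hb, hab⟩ := h
    have haF : a ∉ F := fun h => hS.prop.1 a (hFS h) b hb hab
    refine hf a haF T (Set.insert_subset ha hFT) hT (le_trans ?_ hc)
    have : f a ≤ N := hN ⟨a, by simpa using ⟨b, hb, hab⟩, rfl⟩
    exact_mod_cast this.trans (le_max_left _ _)

theorem admissible_limit {R : α → α → Prop} (hfin : Finitary R) (T : ℕ → Set α)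
    (hT : ∀ n, Admissible R (T n)) :
    Admissible R {x | ∀ᶠ n in (Filter.hyperfilter ℕ : Filter ℕ), x ∈ T n} := by
  refine ⟨?_, ?_⟩
  · intro a ha b hb hab
    obtain ⟨n, h1, h2⟩ := (Filter.Eventually.and ha hb).exists
    exact (hT n).1 a h1 b h2 hab
  · intro a ha x hx
    by_contra hcon
    push Not at hcon
    have h1 : ∀ y ∈ {y | R y x}, ∀ᶠ n in (Filter.hyperfilter ℕ : Filter ℕ), y ∉ T n := by
      intro y hy
      exact Ultrafilter.eventually_not.mpr fun h => hcon y h hy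
    have h2 := (Filter.eventually_all_finite (hfin x)).mpr h1
    obtain ⟨n, h3, h4⟩ := (Filter.Eventually.and ha h2).exists
    obtain ⟨y, hy, hyx⟩ := (hT n).2 a h3 x hx
    exact h4 y hyx hy

theorem exists_infinite_admissible_iff_arbitrarily_large
    (R : α → α → Prop) (hfin : Finitary R) :
    (∃ S : Set α, S.Infinite ∧ Admissible R S) ↔
      ∀ n : ℕ, ∃ S : Set α, Admissible R S ∧ (n : ℕ∞) ≤ S.encard := by
  constructor
  · rintro ⟨S, hS, hA⟩ n
    exact ⟨S, hA, by simp [hS.encard_eq]⟩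
  · intro h
    by_contra hcon
    have hno : ∀ S, Admissible R S → S.Finite := by
      intro S hS
      by_contra hi
      exact hcon ⟨S, hi, hS⟩
    have h0 : Big R ∅ := fun n => by
      obtain ⟨S, hS, hn⟩ := h n
      exact ⟨S, Set.empty_subset _, hS, hn⟩
    have hstep : ∀ F : {F : Set α // Big R F}, ∃ a, a ∉ F.1 ∧ Big R (insert a F.1) :=
      fun F => F.2.step hfin hno
    choose g hg1 hg2 using hstep
    let G : ℕ → {F : Set α // Big R F} :=
      fun n => Nat.rec ⟨∅, h0⟩ (fun _ F => ⟨insert (g F) F.1, hg2 F⟩) n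
    have hG : ∀ n, (G (n + 1)).1 = insert (g (G n)) (G n).1 := fun n => rfl
    have hmono : Monotone fun n => (G n).1 := monotone_nat_of_le_succ fun n => by
      rw [hG]; exact Set.subset_insert _ _
    have hcard : ∀ n : ℕ, (n : ℕ∞) ≤ (G n).1.encard := by
      intro n
      induction n with
      | zero => simp
      | succ n ih =>
        rw [hG, Set.encard_insert_of_notMem (hg1 _)]
        push_cast
        gcongr
    choose T hGT hT _ using fun n => (G n).2 0
    have hlim := admissible_limit hfin T hT
    have hfinL := hno _ hlim
    have hsub : ∀ n, (G n).1 ⊆ {x | ∀ᶠ n in (Filter.hyperfilter ℕ : Filter ℕ), x ∈ T n} := by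
      intro n x hx
      have : ∀ᶠ m in Filter.atTop, x ∈ T m :=
        (Filter.eventually_ge_atTop n).mono fun m hm => hGT m (hmono hm hx)
      exact Nat.hyperfilter_le_atTop this
    have h1 := (hcard (hfinL.toFinset.card + 1)).trans (Set.encard_le_encard (hsub (hfinL.toFinset.card + 1)))
    rw [hfinL.encard_eq_coe_toFinset_card] at h1
    have h2 := ENat.coe_le_coe.mp h1
    exact absurd h2 (Nat.not_succ_le_self _)

end AF
end

section
/- Let F = (A, R) be a finitary argumentation framework. Then F has an infinite stable extension if and only if for every natural number n there exists a stable extension of F containing at least n arguments. -/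
namespace AF

variable {α : Type*}

theorem exists_infinite_stable_iff_arbitrarily_large
    (R : α → α → Prop) (hfin : Finitary R) :
    (∃ S : Set α, S.Infinite ∧ Stable R S) ↔
      ∀ n : ℕ, ∃ S : Set α, Stable R S ∧ (n : ℕ∞) ≤ S.encard := by
  constructor
  · rintro ⟨S, hS, hst⟩ n
    exact ⟨S, hst, by rw [hS.encard_eq]; exact le_top⟩
  · intro h
    choose S hS hn using h
    let U : Ultrafilter ℕ := Filter.hyperfilter ℕ
    let T : Set α := {a | ∀ᶠ n in (U : Filter ℕ), a ∈ S n}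
    have hT : Stable R T := by
      constructor
      · intro a ha b hb hab
        obtain ⟨n, h1, h2⟩ := (Filter.Eventually.and ha hb).exists
        exact (hS n).1 a h1 b h2 hab
      · intro a ha
        have ha' : ∀ᶠ n in (U : Filter ℕ), a ∉ S n := Ultrafilter.eventually_not.2 ha
        by_contra hcon
        push Not at hcon
        have h1 : ∀ b ∈ {x : α | R x a}, ∀ᶠ n in (U : Filter ℕ), b ∉ S n := by
          intro b hb
          exact Ultrafilter.eventually_not.2 fun hbT => hcon b hbT hb
        have h2 := (Filter.eventually_all_finite (hfin a)).2 h1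
        obtain ⟨n, h3, h4⟩ := (ha'.and h2).exists
        obtain ⟨b, hb, hba⟩ := (hS n).2 a h3
        exact h4 b hba hb
    refine ⟨T, fun hfT => ?_, hT⟩
    have h1 : ∀ᶠ n in (U : Filter ℕ), ∀ a ∈ T, a ∈ S n :=
      (Filter.eventually_all_finite hfT).2 fun a ha => ha
    have h2 : ∀ᶠ n in (U : Filter ℕ), T.ncard < n :=
      (Nat.hyperfilter_le_atTop) (Filter.eventually_gt_atTop _)
    obtain ⟨n, h3, h4⟩ := (h1.and h2).exists
    have h5 : S n ⊆ T := by
      intro a ha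
      by_contra haT
      obtain ⟨b, hb, hba⟩ := hT.2 a haT
      exact (hS n).1 b (h3 b hb) a ha hba
    have h6 := (hn n).trans (Set.encard_le_encard h5)
    rw [← hfT.cast_ncard_eq] at h6
    have h7 : n ≤ T.ncard := by exact_mod_cast h6
    omega

end AF
end

section
/- Let F = (A, R) be a finitary argumentation framework. If F has infinitely many pairwise distinct finite stable extensions, then F has an infinite stable extension. -/
namespace AF

variable {α : Type*}

theorem infinitely_many_finite_stable_implies_infinite_stable
    (R : α → α → Prop) (hfin : Finitary R)
    (h : {S : Set α | Stable R S ∧ S.Finite}.Infinite) :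
    ∃ S : Set α, S.Infinite ∧ Stable R S := by
  classical
  set H := {S : Set α | Stable R S ∧ S.Finite} with hH
  haveI : (Filter.cofinite ⊓ Filter.principal H).NeBot := h.cofinite_inf_principal_neBot
  let U : Ultrafilter (Set α) := Ultrafilter.of (Filter.cofinite ⊓ Filter.principal H)
  have hU : (U : Filter (Set α)) ≤ Filter.cofinite ⊓ Filter.principal H := Ultrafilter.of_le _
  have hst : ∀ᶠ T in (U : Filter (Set α)), Stable R T := by
    have h1 : H ∈ (U : Filter (Set α)) := (hU.trans inf_le_right) (Filter.mem_principal_self H)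
    filter_upwards [h1] with T hT using hT.1
  have hne : ∀ S : Set α, ∀ᶠ T in (U : Filter (Set α)), T ≠ S := by
    intro S
    exact (hU.trans inf_le_left) ((Set.finite_singleton S).compl_mem_cofinite)
  let S : Set α := {a | ∀ᶠ T in (U : Filter (Set α)), a ∈ T}
  have hS : Stable R S := by
    constructor
    · intro a ha b hb hab
      obtain ⟨T, hT, h1, h2⟩ := (hst.and (Filter.Eventually.and ha hb)).exists
      exact hT.1 a h1 b h2 hab
    · intro a ha
      have ha' : ∀ᶠ T in (U : Filter (Set α)), a ∉ T := Ultrafilter.eventually_not.2 ha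
      by_contra! hc
      have h2 : ∀ᶠ T in (U : Filter (Set α)), ∀ b ∈ {x | R x a}, b ∉ T := by
        rw [Filter.eventually_all_finite (hfin a)]
        intro b hb
        exact Ultrafilter.eventually_not.2 (fun hbS => hc b hbS hb)
      obtain ⟨T, hT, h1, h3⟩ := (hst.and (ha'.and h2)).exists
      obtain ⟨b, hb, hba⟩ := hT.2 a h1
      exact h3 b hba hb
  refine ⟨S, fun hf => ?_, hS⟩
  have h2 : ∀ᶠ T in (U : Filter (Set α)), ∀ b ∈ S, b ∈ T :=
    (Filter.eventually_all_finite hf).2 (fun b hb => hb)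
  obtain ⟨T, hT, h1, h3⟩ := (hst.and (h2.and (hne S))).exists
  apply h3
  refine Set.Subset.antisymm (fun a haT => ?_) h1
  by_contra haS
  obtain ⟨b, hb, hba⟩ := hS.2 a haS
  exact hT.1 b (h1 b hb) a haT hba

end AF
end

section
/- Let F = (A, R) be an argumentation framework. Every admissible extension of F is contained in a complete extension of F. -/
namespace AF

variable {α : Type*}

theorem admissible_subset_complete
    (R : α → α → Prop) (S : Set α) (hS : Admissible R S) :
    ∃ T : Set α, Complete R T ∧ S ⊆ T := by
  obtain ⟨M, hSM, hM⟩ := zorn_subset_nonempty {T : Set α | Admissible R T} (by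
    intro c hc hchain hne
    refine ⟨⋃₀ c, ⟨?_, ?_⟩, fun s hs => Set.subset_sUnion_of_mem hs⟩
    · rintro a ⟨s, hs, has⟩ b ⟨t, ht, hbt⟩ hab
      rcases hchain.total hs ht with h | h
      · exact (hc ht).1 a (h has) b hbt hab
      · exact (hc hs).1 a has b (h hbt) hab
    · rintro a ⟨s, hs, has⟩ x hx
      obtain ⟨y, hy, hyx⟩ := (hc hs).2 a has x hx
      exact ⟨y, ⟨s, hs, hy⟩, hyx⟩) S hS
  obtain ⟨hcf, hdef⟩ := hM.prop
  refine ⟨M, ⟨hcf, ?_⟩, hSM⟩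
  refine Set.Subset.antisymm hdef ?_
  intro a ha
  have hMa : ∀ b ∈ M, ¬ R b a := by
    intro b hb hba
    obtain ⟨c, hc, hcb⟩ := ha b hba
    exact hcf c hc b hb hcb
  have haM : ∀ b ∈ M, ¬ R a b := by
    intro b hb hab
    obtain ⟨c, hc, hca⟩ := hdef b hb a hab
    exact hMa c hc hca
  have haa : ¬ R a a := by
    intro h
    obtain ⟨c, hc, hca⟩ := ha a h
    exact hMa c hc hca
  have hadm : Admissible R (insert a M) := by
    constructor
    · rintro x (rfl | hx) y (rfl | hy)
      · exact haa
      · exact haM y hy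
      · exact hMa x hx
      · exact hcf x hx y hy
    · intro x hx z hz
      have hd : Defends R M x := by
        rcases hx with rfl | hx
        · exact ha
        · exact hdef x hx
      obtain ⟨y, hy, hyz⟩ := hd z hz
      exact ⟨y, Or.inr hy, hyz⟩
  exact hM.le_of_ge hadm (Set.subset_insert a M) (Set.mem_insert a M)

end AF
end

section
/- Let F = (A, R) be an argumentation framework and let a ∈ A. Then a belongs to every naive extension of F if and only if a does not attack itself (¬ a ↝ a) and for every argument y with ¬ y ↝ y the set {y, a} is conflict-free. -/
namespace AF

variable {α : Type*}

theorem exists_naive_superset (R : α → α → Prop) (S : Set α) (hS : ConflictFree R S) :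
    ∃ T, S ⊆ T ∧ Naive R T := by
  obtain ⟨T, hST, hT⟩ := zorn_subset_nonempty {T : Set α | ConflictFree R T} (by
    intro c hc hchain _
    refine ⟨⋃₀ c, ?_, fun s hs => Set.subset_sUnion_of_mem hs⟩
    rintro x ⟨s, hs, hxs⟩ y ⟨t, ht, hyt⟩
    rcases hchain.total hs ht with h | h
    · exact hc ht x (h hxs) y hyt
    · exact hc hs x hxs y (h hyt)) S hS
  exact ⟨T, hST, hT.prop, fun U hU hcf => Set.Subset.antisymm (hT.le_of_ge hcf hU) hU⟩

theorem mem_every_naive_iff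
    (R : α → α → Prop) (a : α) :
    (∀ S : Set α, Naive R S → a ∈ S) ↔
      (¬ R a a ∧ ∀ y : α, ¬ R y y → ConflictFree R {y, a}) := by
  constructor
  · intro h
    refine ⟨?_, ?_⟩
    · obtain ⟨T, -, hT⟩ := exists_naive_superset R ∅ (by intro x hx; exact hx.elim)
      exact hT.1 a (h T hT) a (h T hT)
    · intro y hy
      obtain ⟨T, hyT, hT⟩ := exists_naive_superset R {y} (by
        rintro x rfl z rfl
        exact hy)
      have haT := h T hT
      have hy' : y ∈ T := hyT rfl
      have hsub : ({y, a} : Set α) ⊆ T := by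
        rintro x (rfl | rfl) <;> assumption
      exact fun x hx z hz => hT.1 x (hsub hx) z (hsub hz)
  · rintro ⟨ha, h⟩ S hS
    have hcf : ConflictFree R (insert a S) := by
      rintro x (rfl | hx) y (rfl | hy)
      · exact ha
      · exact h y (hS.1 y hy y hy) x (Or.inr rfl) y (Or.inl rfl)
      · exact h x (hS.1 x hx x hx) x (Or.inl rfl) y (Or.inr rfl)
      · exact hS.1 x hx y hy
    rw [← hS.2 _ (Set.subset_insert a S) hcf]
    exact Set.mem_insert a S

end AF
end

section
/- Let F be an argumentation framework whose set of arguments is ℕ, and let D, E ⊆ ℕ. Then there exists a tree T ⊆ List ℕ such that the set of paths through T is in bijection with the set of admissible extensions S of F satisfying D ⊆ S and S ∩ E = ∅. Moreover, if F is finitary, then T can be chosen to be finitely branching. -/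
namespace AF

variable {α : Type*}

/-- A tree: a set of finite strings closed under prefixes. -/
def IsTree (T : Set (List ℕ)) : Prop :=
  ∀ σ ∈ T, ∀ τ : List ℕ, τ <+: σ → τ ∈ T

/-- `π` is a path through `T`: all of its finite initial segments belong to `T`. -/
def IsPath (T : Set (List ℕ)) (π : ℕ → ℕ) : Prop :=
  ∀ n : ℕ, (List.range n).map π ∈ T

/-- `T` is finitely branching: every node has only finitely many immediate successors. -/
def FinitelyBranching (T : Set (List ℕ)) : Prop :=
  ∀ σ ∈ T, {n : ℕ | σ ++ [n] ∈ T}.Finite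

open Classical in
/-- Code of the set `S` as a function. -/
noncomputable def code (R : ℕ → ℕ → Prop) (S : Set ℕ) (x : ℕ) : ℕ :=
  if x ∈ S then 0 else if h : ∃ y, y ∈ S ∧ R y x then Nat.find h + 2 else 1

theorem code_zero (R : ℕ → ℕ → Prop) (S : Set ℕ) (x : ℕ) : code R S x = 0 ↔ x ∈ S := by
  unfold code
  split_ifs <;> simp_all

theorem code_one (R : ℕ → ℕ → Prop) (S : Set ℕ) (x : ℕ) :
    code R S x = 1 ↔ x ∉ S ∧ ∀ y, y ∈ S → ¬ R y x := by
  unfold code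
  split_ifs with h1 h2
  · simp [h1]
  · obtain ⟨y, hy, hr⟩ := h2
    constructor
    · intro h; omega
    · intro h; exact absurd hr (h.2 y hy)
  · simp only [true_iff]
    exact ⟨h1, fun y hy hr => h2 ⟨y, hy, hr⟩⟩

theorem code_two (R : ℕ → ℕ → Prop) (S : Set ℕ) (x y : ℕ) :
    code R S x = y + 2 ↔ x ∉ S ∧ (y ∈ S ∧ R y x) ∧ ∀ z < y, ¬ (z ∈ S ∧ R z x) := by
  classical
  unfold code
  split_ifs with h1 h2
  · simp [h1]
  · rw [Nat.add_right_cancel_iff, Nat.find_eq_iff]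
    exact ⟨fun h => ⟨h1, h⟩, fun h => h.2⟩
  · constructor
    · intro h; omega
    · intro h; exact absurd ⟨y, h.2.1⟩ h2

/-- The good sets. -/
def Good (R : ℕ → ℕ → Prop) (D E S : Set ℕ) : Prop :=
  Admissible R S ∧ D ⊆ S ∧ S ∩ E = ∅

theorem closed_aux (R : ℕ → ℕ → Prop) (D E : Set ℕ) (π : ℕ → ℕ)
    (h : ∀ n, ∃ S, Good R D E S ∧ ∀ i < n, code R S i = π i) :
    Good R D E {a | π a = 0} ∧ code R {a | π a = 0} = π := by
  choose S hS hc using h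
  have hm : ∀ n i, i < n → (i ∈ S n ↔ π i = 0) := fun n i hi => by
    rw [← hc n i hi, code_zero]
  have h2 : ∀ x y, π x = y + 2 → π y = 0 ∧ R y x := fun x y hxy => by
    have h1 := hc (x + y + 1) x (by omega)
    rw [hxy, code_two] at h1
    exact ⟨(hm (x + y + 1) y (by omega)).1 h1.2.1.1, h1.2.1.2⟩
  refine ⟨⟨⟨?_, ?_⟩, ?_, ?_⟩, ?_⟩
  · intro a ha b hb
    exact (hS (a + b + 1)).1.1 a ((hm _ a (by omega)).2 ha) b ((hm _ b (by omega)).2 hb)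
  · intro a ha x hx
    have haS := (hm (a + x + 1) a (by omega)).2 ha
    obtain ⟨y, hy, hyx⟩ := (hS (a + x + 1)).1.2 a haS x hx
    have hcx := hc (a + x + 1) x (by omega)
    rcases hp : π x with _ | _ | z
    · exact absurd hyx ((hS (a + x + 1)).1.1 y hy x ((hm _ x (by omega)).2 hp))
    · rw [hp, zero_add, code_one] at hcx
      exact absurd hyx (hcx.2 y hy)
    · exact ⟨z, h2 x z hp⟩
  · intro a ha
    exact (hm (a + 1) a (by omega)).1 ((hS (a + 1)).2.1 ha)
  · ext a
    simp only [Set.mem_inter_iff, Set.mem_setOf_eq, Set.mem_empty_iff_false, iff_false]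
    rintro ⟨ha, hE⟩
    have : a ∈ S (a + 1) ∩ E := ⟨(hm (a + 1) a (by omega)).2 ha, hE⟩
    rw [(hS (a + 1)).2.2] at this
    exact this
  · funext x
    rcases hp : π x with _ | _ | z
    · rw [code_zero]; exact hp
    · rw [zero_add, code_one]
      refine ⟨by simp [hp], fun y hy => ?_⟩
      have hcx := hc (x + y + 1) x (by omega)
      rw [hp, zero_add, code_one] at hcx
      exact hcx.2 y ((hm _ y (by omega)).2 hy)
    · rw [code_two]
      refine ⟨by simp [hp], h2 x z hp, fun y hyz hy => ?_⟩
      have hcx := hc (x + y + 1) x (by omega)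
      rw [hp, code_two] at hcx
      exact hcx.2.2 y hyz ⟨(hm _ y (by omega)).2 hy.1, hy.2⟩

theorem tree_for_admissible (R : ℕ → ℕ → Prop) (D E : Set ℕ) :
    ∃ T : Set (List ℕ), IsTree T ∧
      Nonempty ({π : ℕ → ℕ // IsPath T π} ≃
        {S : Set ℕ // Admissible R S ∧ D ⊆ S ∧ S ∩ E = ∅}) ∧
      (Finitary R → FinitelyBranching T) := by
  refine ⟨{σ | ∃ S n, Good R D E S ∧ σ = (List.range n).map (code R S)}, ?_, ⟨?_⟩, ?_⟩
  · rintro σ ⟨S, n, hS, rfl⟩ τ hτ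
    refine ⟨S, min τ.length n, hS, ?_⟩
    rw [List.prefix_iff_eq_take] at hτ
    conv_lhs => rw [hτ]
    rw [← List.map_take, List.take_range]
  · have key : ∀ π : ℕ → ℕ,
        IsPath {σ | ∃ S n, Good R D E S ∧ σ = (List.range n).map (code R S)} π →
        Good R D E {a | π a = 0} ∧ code R {a | π a = 0} = π := by
      intro π hπ
      apply closed_aux
      intro n
      obtain ⟨S, m, hS, he⟩ := hπ n
      have hl := congrArg List.length he
      simp only [List.length_map, List.length_range] at hl
      subst hl
      refine ⟨S, hS, fun i hi => ?_⟩
      exact (List.map_inj_left.1 he i (List.mem_range.2 hi)).symm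
    exact
      { toFun := fun π => ⟨{a | π.1 a = 0}, (key π.1 π.2).1⟩
        invFun := fun S => ⟨code R S.1, fun n => ⟨S.1, n, S.2, rfl⟩⟩
        left_inv := fun π => Subtype.ext (key π.1 π.2).2
        right_inv := fun S => Subtype.ext (by ext a; exact code_zero R S.1 a) }
  · intro hF σ _
    refine ((Set.toFinite {0, 1}).union ((hF σ.length).image (· + 2))).subset ?_
    rintro n ⟨S, m, hS, he⟩
    have hl := congrArg List.length he
    simp only [List.length_map, List.length_range, List.length_append, List.length_singleton] at hl
    subst hl
    rw [List.range_succ, List.map_append] at he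
    have h1 := (List.append_inj' he rfl).2
    simp only [List.map_cons, List.map_nil, List.cons.injEq, and_true] at h1
    rcases n with _ | _ | y
    · simp
    · simp
    · right
      exact ⟨y, ((code_two R S _ y).1 h1.symm).2.1.2, rfl⟩

end AF
end

section
/- Let F be an argumentation framework whose set of arguments is ℕ, and let D, E ⊆ ℕ. Then there exists a tree T ⊆ List ℕ such that the set of paths through T is in bijection with the set of complete extensions S of F satisfying D ⊆ S and S ∩ E = ∅. Moreover, if F is finitary, then T can be chosen to be finitely branching. -/
namespace AF

variable {α : Type*}

/-- `u x` codes the least attacker of `x` on which `v` vanishes. -/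
def W (R : ℕ → ℕ → Prop) (u v : ℕ → ℕ) : Prop :=
  ∀ x y z : ℕ, (u x = y + 1 → R y x ∧ v y = 0 ∧ (z < y → R z x → v z ≠ 0)) ∧
    (u x = 0 → R y x → v y ≠ 0)

theorem W_unique {R : ℕ → ℕ → Prop} {u v u' v' : ℕ → ℕ} (h : W R u v) (h' : W R u' v')
    (hv : ∀ y, v y = 0 ↔ v' y = 0) : u = u' := by
  funext x
  rcases hu : u x with _ | y <;> rcases hu' : u' x with _ | y'
  · rfl
  · have h1 := (h' x y' 0).1 hu'
    exact absurd ((hv _).2 h1.2.1) ((h x y' 0).2 hu h1.1)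
  · have h1 := (h x y 0).1 hu
    exact absurd ((hv _).1 h1.2.1) ((h' x y 0).2 hu' h1.1)
  · have h1 := (h x y y').1 hu
    have h2 := (h' x y' y).1 hu'
    have := hv y
    have := hv y'
    rcases lt_trichotomy y y' with hlt | heq | hgt
    · exact absurd (by tauto) (h2.2.2 hlt h1.1)
    · rw [heq]
    · exact absurd (by tauto) (h1.2.2 hgt h2.1)

theorem exists_W (R : ℕ → ℕ → Prop) (P : Set ℕ) :
    ∃ u : ℕ → ℕ, (∀ x y z : ℕ, (u x = y + 1 → R y x ∧ y ∈ P ∧ (z < y → R z x → z ∉ P)) ∧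
    (u x = 0 → R y x → y ∉ P)) ∧ ∀ x, u x = 0 ↔ ∀ y, R y x → y ∉ P := by
  classical
  have key : ∀ x, ∃ m : ℕ, (∀ y z : ℕ, (m = y + 1 → R y x ∧ y ∈ P ∧ (z < y → R z x → z ∉ P)) ∧
      (m = 0 → R y x → y ∉ P)) ∧ (m = 0 ↔ ∀ y, R y x → y ∉ P) := by
    intro x
    by_cases hx : ∃ y, R y x ∧ y ∈ P
    · refine ⟨Nat.find hx + 1, ?_, ?_⟩
      · intro y z
        refine ⟨fun h => ?_, fun h => by omega⟩
        obtain rfl : Nat.find hx = y := by omega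
        have := Nat.find_spec hx
        exact ⟨this.1, this.2, fun hz hr hp => Nat.find_min hx hz ⟨hr, hp⟩⟩
      · constructor
        · intro h
          omega
        · intro h
          obtain ⟨y, h1, h2⟩ := hx
          exact absurd h2 (h y h1)
    · push Not at hx
      exact ⟨0, fun y z => ⟨fun h => by omega, fun _ => hx y⟩, by simpa using hx⟩
  choose u hu using key
  exact ⟨u, fun x => (hu x).1, fun x => (hu x).2⟩

/-- The closed set of codes. -/
def Code (R : ℕ → ℕ → Prop) (D E : Set ℕ) (p : ℕ → ℕ) : Prop :=
  W R (fun a => p (2 * a + 1)) (fun a => p (2 * a)) ∧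
  W R (fun a => p (2 * a)) (fun a => p (2 * a + 1)) ∧
  (∀ a b, p (2 * a) = 0 → p (2 * b) = 0 → ¬ R a b) ∧
  (∀ a ∈ D, p (2 * a) = 0) ∧ (∀ a ∈ E, p (2 * a) ≠ 0)

theorem Code_closed {R : ℕ → ℕ → Prop} {D E : Set ℕ} {p : ℕ → ℕ}
    (h : ∀ N, ∃ q, Code R D E q ∧ ∀ i < N, q i = p i) : Code R D E p := by
  refine ⟨?_, ?_, ?_, ?_, ?_⟩
  · intro x y z
    obtain ⟨q, hq, e⟩ := h (2 * (x + y + z) + 2)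
    have := hq.1 x y z
    simpa only [e (2 * x + 1) (by omega), e (2 * y) (by omega), e (2 * z) (by omega)] using this
  · intro x y z
    obtain ⟨q, hq, e⟩ := h (2 * (x + y + z) + 2)
    have := hq.2.1 x y z
    simpa only [e (2 * x) (by omega), e (2 * y + 1) (by omega), e (2 * z + 1) (by omega)] using this
  · intro a b
    obtain ⟨q, hq, e⟩ := h (2 * (a + b) + 2)
    have := hq.2.2.1 a b
    rwa [e (2 * a) (by omega), e (2 * b) (by omega)] at this
  · intro a ha
    obtain ⟨q, hq, e⟩ := h (2 * a + 2)
    have := hq.2.2.2.1 a ha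
    rwa [e (2 * a) (by omega)] at this
  · intro a ha
    obtain ⟨q, hq, e⟩ := h (2 * a + 2)
    have := hq.2.2.2.2 a ha
    rwa [e (2 * a) (by omega)] at this

theorem W_zero {R : ℕ → ℕ → Prop} {u v : ℕ → ℕ} (h : W R u v) (x : ℕ) :
    u x = 0 ↔ ∀ y, R y x → v y ≠ 0 := by
  constructor
  · exact fun hu y => (h x y 0).2 hu
  · intro hy
    rcases hu : u x with _ | y
    · rfl
    · have := (h x y 0).1 hu
      exact absurd this.2.1 (hy y this.1)

theorem Code_complete {R : ℕ → ℕ → Prop} {D E : Set ℕ} {p : ℕ → ℕ} (h : Code R D E p) :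
    Complete R {a | p (2 * a) = 0} ∧ D ⊆ {a | p (2 * a) = 0} ∧ {a | p (2 * a) = 0} ∩ E = ∅ := by
  obtain ⟨h1, h2, h3, h4, h5⟩ := h
  refine ⟨⟨fun a ha b hb => h3 a b ha hb, ?_⟩, h4, ?_⟩
  · ext a
    have e1 := W_zero h1
    have e2 := W_zero h2 a
    simp only [ne_eq] at e1 e2
    simp only [Set.mem_setOf_eq, Defends]
    rw [e2]
    refine forall_congr' fun x => imp_congr_right fun _ => ?_
    rw [e1]
    push Not
    exact exists_congr fun y => and_comm
  · ext a
    simp only [Set.mem_inter_iff, Set.mem_setOf_eq, Set.mem_empty_iff_false, iff_false, not_and]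
    exact fun ha hE => h5 a hE ha

theorem Code_surj {R : ℕ → ℕ → Prop} {D E S : Set ℕ} (hS : Complete R S) (hD : D ⊆ S)
    (hE : S ∩ E = ∅) : ∃ p, Code R D E p ∧ {a | p (2 * a) = 0} = S := by
  obtain ⟨f, hf, hf0⟩ := exists_W R S
  obtain ⟨g, hg, hg0⟩ := exists_W R {x | f x = 0}
  have hgS : ∀ a, g a = 0 ↔ a ∈ S := by
    intro a
    rw [hg0, hS.2]
    simp only [Set.mem_setOf_eq, Defends]
    refine forall_congr' fun x => imp_congr_right fun _ => ?_
    rw [hf0]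
    push Not
    exact exists_congr fun y => and_comm
  let p : ℕ → ℕ := fun n => if n % 2 = 0 then g (n / 2) else f (n / 2)
  have pe : ∀ a, p (2 * a) = g a := by
    intro a
    have : 2 * a / 2 = a := by omega
    simp [p]
  have po : ∀ a, p (2 * a + 1) = f a := by
    intro a
    have h1 : (2 * a + 1) / 2 = a := by omega
    have h2 : (2 * a + 1) % 2 = 1 := by omega
    simp [p, h1, h2]
  refine ⟨p, ?_, ?_⟩
  · unfold Code
    simp only [pe, po]
    refine ⟨?_, ?_, ?_, ?_, ?_⟩
    · intro x y z
      have := hf x y z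
      simpa only [← hgS] using this
    · exact hg
    · intro a b ha hb
      exact hS.1 a ((hgS a).1 ha) b ((hgS b).1 hb)
    · exact fun a ha => (hgS a).2 (hD ha)
    · intro a ha h0
      have : a ∈ S ∩ E := ⟨(hgS a).1 h0, ha⟩
      rw [hE] at this
      exact this
  · ext a
    simp only [Set.mem_setOf_eq, pe, hgS]

theorem Code_inj {R : ℕ → ℕ → Prop} {D E : Set ℕ} {p q : ℕ → ℕ} (hp : Code R D E p)
    (hq : Code R D E q) (h : {a | p (2 * a) = 0} = {a | q (2 * a) = 0}) : p = q := by
  have h1 := W_unique hp.1 hq.1 (fun y => Set.ext_iff.1 h y)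
  have h2 := W_unique hp.2.1 hq.2.1 (fun y => by rw [congrFun h1 y])
  funext n
  rcases Nat.even_or_odd' n with ⟨a, rfl | rfl⟩
  · exact congrFun h2 a
  · exact congrFun h1 a

theorem Code_bound {R : ℕ → ℕ → Prop} {D E : Set ℕ} {p : ℕ → ℕ} (hp : Code R D E p) (n : ℕ) :
    p n = 0 ∨ ∃ y, R y (n / 2) ∧ y + 1 = p n := by
  rcases hn : p n with _ | y
  · exact Or.inl rfl
  · refine Or.inr ⟨y, ?_, rfl⟩
    rcases Nat.even_or_odd' n with ⟨a, rfl | rfl⟩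
    · have : 2 * a / 2 = a := by omega
      rw [this]
      exact ((hp.2.1 a y 0).1 hn).1
    · have : (2 * a + 1) / 2 = a := by omega
      rw [this]
      exact ((hp.1 a y 0).1 hn).1

theorem tree_for_complete (R : ℕ → ℕ → Prop) (D E : Set ℕ) :
    ∃ T : Set (List ℕ), IsTree T ∧
      Nonempty ({π : ℕ → ℕ // IsPath T π} ≃
        {S : Set ℕ // Complete R S ∧ D ⊆ S ∧ S ∩ E = ∅}) ∧
      (Finitary R → FinitelyBranching T) := by
  let T : Set (List ℕ) := {σ | ∃ p, Code R D E p ∧ ∃ n, σ = (List.range n).map p}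
  have hT : ∀ π, IsPath T π ↔ Code R D E π := by
    intro π
    constructor
    · intro h
      refine Code_closed fun N => ?_
      obtain ⟨q, hq, n, e⟩ := h N
      have hn : N = n := by simpa using congrArg List.length e
      subst hn
      refine ⟨q, hq, fun i hi => ?_⟩
      have := List.map_inj_left.1 e i (List.mem_range.2 hi)
      exact this.symm
    · exact fun h n => ⟨π, h, n, rfl⟩
  refine ⟨T, ?_, ⟨Equiv.ofBijective
    (fun π => ⟨{a | π.1 (2 * a) = 0}, Code_complete ((hT π.1).1 π.2)⟩) ⟨?_, ?_⟩⟩, ?_⟩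
  · rintro σ ⟨p, hp, n, rfl⟩ τ hτ
    refine ⟨p, hp, min τ.length n, ?_⟩
    rw [List.prefix_iff_eq_take.1 hτ, ← List.map_take, List.take_range]
    simp
  · intro π ρ h
    exact Subtype.ext (Code_inj ((hT _).1 π.2) ((hT _).1 ρ.2) (congrArg Subtype.val h))
  · rintro ⟨S, h1, h2, h3⟩
    obtain ⟨p, hp, e⟩ := Code_surj h1 h2 h3
    exact ⟨⟨p, (hT p).2 hp⟩, Subtype.ext e⟩
  · intro hF σ _
    refine (((hF (σ.length / 2)).image (· + 1)).insert 0).subset ?_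
    rintro m ⟨p, hp, n, e⟩
    have hn : σ.length + 1 = n := by simpa using congrArg List.length e
    subst hn
    rw [List.range_succ, List.map_append] at e
    have hm : m = p σ.length := by
      have := (List.append_inj e (by simp)).2
      simpa using this
    subst hm
    rcases Code_bound hp σ.length with h | ⟨y, h, h'⟩
    · exact Or.inl h
    · exact Or.inr ⟨y, h, h'⟩

end AF
end
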